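/- Let T be a tree. Then every maximum dissociation set of T contains exactly one end-vertex of each insulated α₃-critical edge of T. -/

import Mathlib

open SimpleGraph

/-- `l` is a (not necessarily induced) `k`-path in `G`: a list of `k` pairwise distinct
vertices in which consecutive vertices are adjacent. -/
def IsKPath {V : Type*} (G : SimpleGraph V) (k : ℕ) (l : List V) : Prop :=
  l.length = k ∧ l.Nodup ∧ l.Chain' G.Adj

/-- A `k`-matching in `G`: a finite set of pairwise vertex-disjoint `k`-paths. -/
def IsKMatching {V : Type*} (G : SimpleGraph V) (k : ℕ) (M : Finset (List V)) : Prop :=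
  (∀ l ∈ M, IsKPath G k l) ∧
    (M : Set (List V)).Pairwise fun l₁ l₂ => ∀ v ∈ l₁, v ∉ l₂

/-- The `k`-matching number `μ_k(G)`: the maximum cardinality of a `k`-matching. -/
noncomputable def kMatchNum {V : Type*} (G : SimpleGraph V) (k : ℕ) : ℕ :=
  sSup {n | ∃ M : Finset (List V), IsKMatching G k M ∧ M.card = n}

/-- A maximum `k`-matching: a `k`-matching of cardinality `μ_k(G)`. -/
def IsMaxKMatching {V : Type*} (G : SimpleGraph V) (k : ℕ) (M : Finset (List V)) : Prop :=
  IsKMatching G k M ∧ M.card = kMatchNum G k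

/-- A `k`-independent set: a set of vertices whose induced subgraph contains no `k`-path. -/
def IsKIndepSet {V : Type*} (G : SimpleGraph V) (k : ℕ) (S : Finset V) : Prop :=
  ∀ l : List V, IsKPath G k l → ¬ (∀ v ∈ l, v ∈ S)

/-- The `k`-independence number `α_k(G)`. -/
noncomputable def kIndepNum {V : Type*} (G : SimpleGraph V) (k : ℕ) : ℕ :=
  sSup {n | ∃ S : Finset V, IsKIndepSet G k S ∧ S.card = n}

/-- A `k`-vertex cover: a set of vertices meeting every `k`-path of `G`. -/
def IsKCover {V : Type*} (G : SimpleGraph V) (k : ℕ) (C : Finset V) : Prop :=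
  ∀ l : List V, IsKPath G k l → ∃ v ∈ l, v ∈ C

/-- The `k`-vertex cover number `τ_k(G)`. -/
noncomputable def kCoverNum {V : Type*} (G : SimpleGraph V) (k : ℕ) : ℕ :=
  sInf {n | ∃ C : Finset V, IsKCover G k C ∧ C.card = n}

/-- A dissociation set: a set of vertices inducing a subgraph of maximum degree at most 1,
i.e. every vertex of `S` has at most one neighbour inside `S`. -/
def IsDissocSet {V : Type*} (G : SimpleGraph V) (S : Finset V) : Prop :=
  ∀ v ∈ S, ∀ u ∈ S, ∀ w ∈ S, G.Adj v u → G.Adj v w → u = w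

/-- The dissociation number `α₃(G)`. -/
noncomputable def dissNum {V : Type*} (G : SimpleGraph V) : ℕ :=
  sSup {n | ∃ S : Finset V, IsDissocSet G S ∧ S.card = n}

/-- A maximum dissociation set: a dissociation set of cardinality `α₃(G)`. -/
def IsMaxDissocSet {V : Type*} (G : SimpleGraph V) (S : Finset V) : Prop :=
  IsDissocSet G S ∧ S.card = dissNum G

/-- `uv` is an `α₃`-critical edge of `G`: deleting it increases the dissociation number. -/
def IsAlpha3Critical {V : Type*} (G : SimpleGraph V) (u v : V) : Prop :=
  G.Adj u v ∧ dissNum G < dissNum (G.deleteEdges {s(u, v)})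

/-- `uv` is a `μ₃`-critical edge of `G`: deleting it decreases the `3`-matching number. -/
def IsMu3Critical {V : Type*} (G : SimpleGraph V) (u v : V) : Prop :=
  G.Adj u v ∧ kMatchNum (G.deleteEdges {s(u, v)}) 3 < kMatchNum G 3

/-- An insulated `α₃`-critical edge: an `α₃`-critical edge sharing no end-vertex with any
other `α₃`-critical edge. -/
def IsInsulated {V : Type*} (G : SimpleGraph V) (u v : V) : Prop :=
  IsAlpha3Critical G u v ∧
    ∀ x y : V, IsAlpha3Critical G x y → s(x, y) ≠ s(u, v) →
      x ≠ u ∧ x ≠ v ∧ y ≠ u ∧ y ≠ v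

/-- A flexible vertex: one lying in some but not all maximum dissociation sets. -/
def IsFlexible {V : Type*} (G : SimpleGraph V) (v : V) : Prop :=
  (∃ S : Finset V, IsMaxDissocSet G S ∧ v ∈ S) ∧
    (∃ S : Finset V, IsMaxDissocSet G S ∧ v ∉ S)

/-- The set of static-included vertices: vertices lying in every maximum dissociation set. -/
def staticIncluded {V : Type*} (G : SimpleGraph V) : Set V :=
  {v | ∀ S : Finset V, IsMaxDissocSet G S → v ∈ S}

/-- The set of static-excluded vertices: vertices lying in no maximum dissociation set. -/
def staticExcluded {V : Type*} (G : SimpleGraph V) : Set V :=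
  {v | ∀ S : Finset V, IsMaxDissocSet G S → v ∉ S}

/-- The (unordered) edge `uv` occurs as an edge of the path recorded by the list `l`. -/
def EdgeInList {V : Type*} (l : List V) (u v : V) : Prop :=
  ∃ p ∈ l.zip l.tail, p = (u, v) ∨ p = (v, u)

/-! A dissociation set of `G - uv` larger than `α₃(G)` contains `u` and `v`, and when `uv` is
insulated both of them have a neighbour in it: were `u` isolated, `v` would have a unique neighbour
`x` there, the set would be a dissociation set of `G - vx`, and `vx` would be critical too. If `uv`
is moreover a bridge, combine a maximum dissociation set `S` of `G` on one side of it with a maximum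
dissociation set of `G - uv` on the other. One of the two combinations is larger than `S`, and on
the side where it agrees with `S`, the end-vertex of `uv` lies in `S` together with a neighbour
other than the opposite end-vertex, which is therefore not in `S`. -/

lemma card_lt_card_filter_union_filter_not_or {α : Type*} [DecidableEq α] {s t : Finset α}
    (p : α → Prop) [DecidablePred p] (hst : s.card < t.card) :
    s.card < ({x ∈ s | p x} ∪ {x ∈ t | ¬ p x}).card ∨
      s.card < ({x ∈ t | p x} ∪ {x ∈ s | ¬ p x}).card := by
  rw [Finset.card_union_of_disjoint (Finset.disjoint_filter_filter_not s t p),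
    Finset.card_union_of_disjoint (Finset.disjoint_filter_filter_not t s p)]
  have hs := s.card_filter_add_card_filter_not p
  have ht := t.card_filter_add_card_filter_not p
  omega

section Dissociation

variable {V : Type*} {G : SimpleGraph V} {A B D S : Finset V} {u v : V}

lemma IsDissocSet.anti {H : SimpleGraph V} (hHG : H ≤ G) (hS : IsDissocSet G S) :
    IsDissocSet H S :=
  fun a ha b hb c hc hab hac => hS a ha b hb c hc (hHG hab) (hHG hac)

lemma IsDissocSet.filter_union_filter_not [DecidableEq V] {p : V → Prop} [DecidablePred p]
    (hp : ∀ ⦃a b⦄, G.Adj a b → (p a ↔ p b)) (hA : IsDissocSet G A) (hB : IsDissocSet G B) :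
    IsDissocSet G ({x ∈ A | p x} ∪ {x ∈ B | ¬ p x}) := by
  intro a ha b hb c hc hab hac
  have hpb := hp hab
  have hpc := hp hac
  simp only [Finset.mem_union, Finset.mem_filter] at ha hb hc
  by_cases hpa : p a
  · exact hA a (by tauto) b (by tauto) c (by tauto) hab hac
  · exact hB a (by tauto) b (by tauto) c (by tauto) hab hac

lemma IsDissocSet.mem_and_exists_adj_of_not_isDissocSet
    (hD : IsDissocSet (G.deleteEdges {s(u, v)}) D) (hDG : ¬ IsDissocSet G D) :
    u ∈ D ∧ v ∈ D ∧ ∃ w ∈ D,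
      (G.deleteEdges {s(u, v)}).Adj u w ∨ (G.deleteEdges {s(u, v)}).Adj v w := by
  have of_eq : ∀ a ∈ D, ∀ b ∈ D, ∀ c ∈ D, G.Adj a c → b ≠ c → s(a, b) = s(u, v) →
      u ∈ D ∧ v ∈ D ∧ ∃ w ∈ D,
        (G.deleteEdges {s(u, v)}).Adj u w ∨ (G.deleteEdges {s(u, v)}).Adj v w := by
    intro a ha b hb c hc hac hbc hab
    have hac' : (G.deleteEdges {s(u, v)}).Adj a c :=
      deleteEdges_adj.mpr ⟨hac, fun h => hbc (Sym2.congr_right.mp (hab.trans h.symm))⟩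
    obtain ⟨rfl, rfl⟩ | ⟨rfl, rfl⟩ := Sym2.eq_iff.mp hab
    · exact ⟨ha, hb, c, hc, .inl hac'⟩
    · exact ⟨hb, ha, c, hc, .inr hac'⟩
  simp only [IsDissocSet, not_forall] at hDG
  obtain ⟨a, ha, b, hb, c, hc, hab, hac, hbc⟩ := hDG
  by_cases hab_eq : s(a, b) = s(u, v)
  · exact of_eq a ha b hb c hc hac hbc hab_eq
  by_cases hac_eq : s(a, c) = s(u, v)
  · exact of_eq a ha c hc b hb hab (Ne.symm hbc) hac_eq
  · exact absurd (hD a ha b hb c hc (deleteEdges_adj.mpr ⟨hab, hab_eq⟩)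
      (deleteEdges_adj.mpr ⟨hac, hac_eq⟩)) hbc

variable [Finite V]

lemma bddAbove_card_isDissocSet (G : SimpleGraph V) :
    BddAbove {n | ∃ S : Finset V, IsDissocSet G S ∧ S.card = n} := by
  have := Fintype.ofFinite V
  refine ⟨Fintype.card V, ?_⟩
  rintro _ ⟨S, -, rfl⟩
  exact S.card_le_univ

lemma IsDissocSet.card_le_dissNum (hS : IsDissocSet G S) : S.card ≤ dissNum G :=
  le_csSup (bddAbove_card_isDissocSet G) ⟨S, hS, rfl⟩

lemma exists_isMaxDissocSet (G : SimpleGraph V) : ∃ S : Finset V, IsMaxDissocSet G S :=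
  Nat.sSup_mem (s := {n | ∃ S : Finset V, IsDissocSet G S ∧ S.card = n})
    ⟨0, ∅, by simp [IsDissocSet], rfl⟩ (bddAbove_card_isDissocSet G)

end Dissociation

section Insulated

variable {V : Type*} {G : SimpleGraph V} {D E S : Finset V} {u v : V}

lemma IsInsulated.symm (huv : IsInsulated G u v) : IsInsulated G v u := by
  obtain ⟨⟨hadj, hlt⟩, hins⟩ := huv
  rw [Sym2.eq_swap] at hlt
  refine ⟨⟨hadj.symm, hlt⟩, fun x y hxy hne => ?_⟩
  rw [Sym2.eq_swap (a := v)] at hne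
  have := hins x y hxy hne
  tauto

variable [Finite V]

lemma IsInsulated.mem_and_exists_adj (huv : IsInsulated G u v)
    (hD : IsDissocSet (G.deleteEdges {s(u, v)}) D) (hcard : dissNum G < D.card) :
    u ∈ D ∧ ∃ w ∈ D, (G.deleteEdges {s(u, v)}).Adj u w := by
  obtain ⟨hu, hv, x, hx, hux | hvx⟩ :=
    hD.mem_and_exists_adj_of_not_isDissocSet fun h => hcard.not_ge h.card_le_dissNum
  · exact ⟨hu, x, hx, hux⟩
  have hD_not : ¬ IsDissocSet (G.deleteEdges {s(v, x)}) D := by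
    intro h
    have hcrit : IsAlpha3Critical G v x :=
      ⟨deleteEdges_le _ hvx, hcard.trans_le h.card_le_dissNum⟩
    have hne : s(v, x) ≠ s(u, v) := (deleteEdges_adj.mp hvx).2
    exact (huv.2 v x hcrit hne).2.1 rfl
  have hle : (G.deleteEdges {s(v, x)}).deleteEdges {s(u, v)} ≤ G.deleteEdges {s(u, v)} :=
    deleteEdges_mono (deleteEdges_le _)
  obtain ⟨-, -, w, hw, huw | hvw⟩ := (hD.anti hle).mem_and_exists_adj_of_not_isDissocSet hD_not
  · exact ⟨hu, w, hw, hle huw⟩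
  · obtain rfl : w = x := hD v hv w hw x hx (hle hvw) hvx
    simp [deleteEdges_adj] at hvw

lemma IsInsulated.mem_and_notMem_of_reachable (huv : IsInsulated G u v) (hS : IsDissocSet G S)
    (hE : IsDissocSet (G.deleteEdges {s(u, v)}) E) (hcard : dissNum G < E.card)
    (hES : ∀ w ∈ E, (G.deleteEdges {s(u, v)}).Reachable u w → w ∈ S) : u ∈ S ∧ v ∉ S := by
  obtain ⟨huE, w, hwE, huw⟩ := huv.mem_and_exists_adj hE hcard
  have hu : u ∈ S := hES u huE .rfl
  have hw : w ∈ S := hES w hwE huw.reachable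
  refine ⟨hu, fun hv => ?_⟩
  obtain rfl : w = v := hS u hu w hw v hv (deleteEdges_le _ huw) huv.1.1
  simp [deleteEdges_adj] at huw

end Insulated

theorem tree_maxDissoc_exactly_one_endvertex_insulated_general {V : Type*} [Finite V]
    {G : SimpleGraph V} {S : Finset V} (hS : IsMaxDissocSet G S) {u v : V}
    (huv : IsInsulated G u v) (hbridge : G.IsBridge s(u, v)) :
    (u ∈ S ∧ v ∉ S) ∨ (u ∉ S ∧ v ∈ S) := by
  classical
  set H := G.deleteEdges {s(u, v)} with hH
  have hSH : IsDissocSet H S := hS.1.anti (deleteEdges_le _)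
  obtain ⟨D, hD, hDcard⟩ := exists_isMaxDissocSet H
  have hSD : S.card < D.card := by
    rw [hS.2, hDcard]
    exact huv.1.2
  have hside : ∀ ⦃a b⦄, H.Adj a b → (H.Reachable u a ↔ H.Reachable u b) := fun a b hab =>
    ⟨fun h => h.trans hab.reachable, fun h => h.trans hab.symm.reachable⟩
  rcases card_lt_card_filter_union_filter_not_or (H.Reachable u) hSD with hcard | hcard <;>
    rw [hS.2] at hcard
  · refine .inl <| huv.mem_and_notMem_of_reachable hS.1
      (hSH.filter_union_filter_not hside hD) hcard fun w hw huw => ?_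
    simp only [Finset.mem_union, Finset.mem_filter] at hw
    tauto
  · have hH_swap : H = G.deleteEdges {s(v, u)} := by rw [hH, Sym2.eq_swap]
    refine .inr <| And.symm <| huv.symm.mem_and_notMem_of_reachable hS.1
      (hH_swap ▸ hD.filter_union_filter_not hside hSH) hcard fun w hw hvw => ?_
    have huw : ¬ H.Reachable u w := fun huw => hbridge (huw.trans (hH_swap ▸ hvw.symm))
    simp only [Finset.mem_union, Finset.mem_filter] at hw
    tauto

/-- Every maximum dissociation set of a tree contains exactly one end-vertex of each
insulated `α₃`-critical edge. -/
theorem tree_maxDissoc_exactly_one_endvertex_insulated {V : Type*} [Fintype V]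
    [DecidableEq V] (T : SimpleGraph V) (hT : T.IsTree) :
    ∀ S : Finset V, IsMaxDissocSet T S → ∀ u v : V, IsInsulated T u v →
      (u ∈ S ∧ v ∉ S) ∨ (u ∉ S ∧ v ∈ S) := by
  intro S hS u v huv
  exact tree_maxDissoc_exactly_one_endvertex_insulated_general hS huv
    (isAcyclic_iff_forall_adj_isBridge.mp hT.isAcyclic huv.1.1)
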